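/- arXiv:2404.06476 — 2 statements merged into one kernel-verified Lean document; each statement's English description precedes it below -/
import Mathlib

section
/- If the maximal spectral type σ of a mixing automorphism T (restricted to the mean-zero subspace) is mutually singular with its fifth convolution power σ^{*5}, then every intertwining operator P : L²⊗⁵ → L² with P T⊗⁵ = T P and P* H ⊂ H⊗⁵ vanishes on H⊗⁵. -/
open MeasureTheory Filter
open scoped InnerProductSpace

/-
Let `τ` be the spectral measure of `g`. Boundedness of the intertwiner `P` forces the spectral
measure of `P g` to be at most `‖P‖² τ`. If `P g` has mean zero, its spectral measure is also
absolutely continuous with respect to `σ`, hence it vanishes by singularity, and so does `P g`.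

The mean of `P g` is an invariant functional of `g`, so it vanishes as soon as `τ` has no atom at
`0`. Complex conjugation commutes with the Koopman operator and reflects spectral measures, so `σ`
is quasi-symmetric: an atom `a` of `σ` comes with an atom `-a`, and
`a = a + (a - a) + ⋯ + (a - a)` would be an atom of every odd convolution power of `σ`. As `σ` is
singular to such a power, it has no atoms; then neither does the power, nor `τ`.
-/

open scoped BoundedContinuousFunction NNReal ENNReal

lemma measure_le_of_forall_lintegral_le {Y : Type*} [TopologicalSpace Y] [MeasurableSpace Y]
    [HasOuterApproxClosed Y] [OpensMeasurableSpace Y] {ν ρ : Measure Y} [IsFiniteMeasure ν]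
    [ν.WeaklyRegular] [IsFiniteMeasure ρ]
    (h : ∀ f : Y →ᵇ ℝ≥0, ∫⁻ y, f y ∂ν ≤ ∫⁻ y, f y ∂ρ) : ν ≤ ρ := by
  refine Measure.le_iff.2 fun S hS => ?_
  rw [hS.measure_eq_iSup_isClosed_of_ne_top (measure_ne_top ν S)]
  refine iSup₂_le fun K hKS => iSup_le fun hK => ?_
  have hνK : ν K ≤ ρ K :=
    ge_of_tendsto' (HasOuterApproxClosed.tendsto_lintegral_apprSeq hK ρ) fun n =>
      (HasOuterApproxClosed.measure_le_lintegral hK ν n).trans (h (hK.apprSeq n))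
  exact hνK.trans (measure_mono hKS)

section Convolution

variable {G : Type*} [MeasurableSpace G]

section AddMonoid

variable [AddMonoid G]

lemma sfinite_conv_iterate (ρ : Measure G) [SFinite ρ] (n : ℕ) : SFinite (ρ.conv^[n] ρ) := by
  induction n with
  | zero => assumption
  | succ n ih => rw [Function.iterate_succ_apply']; infer_instance

variable [MeasurableAdd₂ G] [MeasurableSingletonClass G]

lemma mul_measure_singleton_le_conv_singleton (ρ ν : Measure G) [SFinite ν] (a b : G) :
    ρ {a} * ν {b} ≤ (ρ.conv ν) {a + b} := by
  rw [Measure.conv, Measure.map_apply measurable_add (measurableSet_singleton _),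
    ← Measure.prod_prod, Set.singleton_prod_singleton]
  exact measure_mono (by simp)

lemma nullSingletonClass_conv [IsLeftCancelAdd G] (ρ ν : Measure G) [SFinite ν]
    [NullSingletonClass ν] : NullSingletonClass (ρ.conv ν) where
  measure_singleton a := by
    have hs : MeasurableSet ((fun x : G × G => x.1 + x.2) ⁻¹' {a}) :=
      measurable_add (measurableSet_singleton a)
    rw [Measure.conv, Measure.map_apply measurable_add (measurableSet_singleton a),
      Measure.measure_prod_null hs]
    refine .of_forall fun x => Set.Subsingleton.measure_zero ?_ ν
    exact fun y hy z hz => add_left_cancel (hy.trans hz.symm)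

lemma nullSingletonClass_conv_iterate [IsLeftCancelAdd G] (ρ : Measure G) [SFinite ρ]
    [NullSingletonClass ρ] (n : ℕ) : NullSingletonClass (ρ.conv^[n] ρ) := by
  induction n with
  | zero => assumption
  | succ n ih =>
    have := sfinite_conv_iterate ρ n
    rw [Function.iterate_succ_apply']
    exact nullSingletonClass_conv ρ _

end AddMonoid

variable [AddGroup G] [MeasurableAdd₂ G] [MeasurableSingletonClass G]

lemma conv_iterate_singleton_ne_zero_of_even {ρ : Measure G} [SFinite ρ] {a : G}
    (ha : ρ {a} ≠ 0) (hna : ρ {-a} ≠ 0) {n : ℕ} (hn : Even n) : (ρ.conv^[n] ρ) {a} ≠ 0 := by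
  obtain ⟨k, rfl⟩ := even_iff_exists_two_mul.1 hn
  clear hn
  induction k with
  | zero => exact ha
  | succ k ih =>
    have := sfinite_conv_iterate ρ (2 * k)
    have hle : ρ {a} * (ρ {-a} * (ρ.conv^[2 * k] ρ) {a}) ≤ (ρ.conv^[2 * (k + 1)] ρ) {a} := calc
      _ ≤ ρ {a} * (ρ.conv (ρ.conv^[2 * k] ρ)) {-a + a} := by
        gcongr; exact mul_measure_singleton_le_conv_singleton ..
      _ ≤ (ρ.conv (ρ.conv (ρ.conv^[2 * k] ρ))) {a + (-a + a)} :=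
        mul_measure_singleton_le_conv_singleton ..
      _ = (ρ.conv^[2 * (k + 1)] ρ) {a} := by
        simp only [neg_add_cancel, add_zero, mul_add_one, Function.iterate_succ_apply']
    exact ((mul_ne_zero ha (mul_ne_zero hna ih)).bot_lt.trans_le hle).ne'

lemma nullSingletonClass_of_mutuallySingular_conv_iterate [MeasurableNeg G] {ρ : Measure G}
    [SFinite ρ] (hneg : ρ.neg ≪ ρ) {n : ℕ} (hn : Even n) (hsing : ρ ⟂ₘ ρ.conv^[n] ρ) :
    NullSingletonClass ρ where
  measure_singleton a := by
    by_contra ha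
    have hna : ρ {-a} ≠ 0 := fun h => ha <| by
      simpa [Measure.neg_apply] using hneg h
    obtain ⟨S, -, hρS, hconvS⟩ := hsing
    by_cases haS : a ∈ S
    · exact ha (measure_mono_null (Set.singleton_subset_iff.2 haS) hρS)
    · exact conv_iterate_singleton_ne_zero_of_even ha hna hn
        (measure_mono_null (Set.singleton_subset_iff.2 haS) hconvS)

end Convolution

section Hilbert

lemma norm_linearCombination_eq_of_inner_eq {𝕜 E F ι : Type*} [RCLike 𝕜]
    [NormedAddCommGroup E] [InnerProductSpace 𝕜 E] [NormedAddCommGroup F] [InnerProductSpace 𝕜 F]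
    {v : ι → E} {w : ι → F} (h : ∀ i j, ⟪v i, v j⟫_𝕜 = ⟪w i, w j⟫_𝕜) (c : ι →₀ 𝕜) :
    ‖Finsupp.linearCombination 𝕜 v c‖ = ‖Finsupp.linearCombination 𝕜 w c‖ := by
  simp only [norm_eq_sqrt_re_inner (𝕜 := 𝕜), Finsupp.linearCombination_apply, Finsupp.sum,
    sum_inner, inner_sum, inner_smul_left, inner_smul_right, h]

lemma semiconj_zpow {R E F : Type*} [Semiring R] [SeminormedAddCommGroup E] [Module R E]
    [SeminormedAddCommGroup F] [Module R F] {V : E ≃ₗᵢ[R] E} {W : F ≃ₗᵢ[R] F} {J : E → F}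
    (h : Function.Semiconj J V W) (n : ℤ) : Function.Semiconj J ⇑(V ^ n) ⇑(W ^ n) := by
  have hinv : Function.Semiconj J ⇑V⁻¹ ⇑W⁻¹ :=
    h.inverses_right V.apply_symm_apply W.symm_apply_apply
  induction n with
  | zero => exact fun _ => rfl
  | succ n ih =>
    simp only [zpow_add_one, LinearIsometryEquiv.coe_mul]
    exact ih.comp_right h
  | pred n ih =>
    simp only [zpow_sub_one, LinearIsometryEquiv.coe_mul]
    exact ih.comp_right hinv

end Hilbert

section L2

variable {X 𝕜 : Type*} [MeasurableSpace X] [RCLike 𝕜] {μ : Measure X}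

lemma inner_star_star (f g : Lp 𝕜 2 μ) : ⟪star f, star g⟫_𝕜 = ⟪g, f⟫_𝕜 := by
  simp only [L2.inner_def]
  refine integral_congr_ae ?_
  filter_upwards [Lp.coeFn_star f, Lp.coeFn_star g] with x hf hg
  simp [hf, hg, mul_comm]

lemma integral_coeFn_star {p : ℝ≥0∞} (f : Lp 𝕜 p μ) :
    ∫ x, (star f : Lp 𝕜 p μ) x ∂μ = star (∫ x, f x ∂μ) :=
  (integral_congr_ae (Lp.coeFn_star f)).trans integral_conj

lemma inner_lpConst_one [IsFiniteMeasure μ] (f : Lp 𝕜 2 μ) :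
    ⟪Lp.const 2 μ (1 : 𝕜), f⟫_𝕜 = ∫ x, f x ∂μ := by
  rw [← indicatorConstLp_univ, L2.inner_indicatorConstLp_one, setIntegral_univ]

lemma compMeasurePreserving_star {R Y : Type*} [NormedAddCommGroup R] [StarAddMonoid R]
    [NormedStarGroup R] [MeasurableSpace Y] {ν : Measure Y} {p : ℝ≥0∞} {S : X → Y}
    (hS : MeasurePreserving S μ ν) (f : Lp R p ν) :
    Lp.compMeasurePreserving S hS (star f) = star (Lp.compMeasurePreserving S hS f) := by
  apply Lp.ext
  filter_upwards [Lp.coeFn_compMeasurePreserving (star f) hS,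
    Lp.coeFn_star (Lp.compMeasurePreserving S hS f), Lp.coeFn_compMeasurePreserving f hS,
    hS.quasiMeasurePreserving.ae_eq_comp (Lp.coeFn_star f)] with x hcomp_star hstar_comp hcomp hstar
  rw [hcomp_star, hstar_comp, Pi.star_apply, hcomp]
  exact hstar

lemma integral_compMeasurePreserving {E Y : Type*} [NormedAddCommGroup E] [NormedSpace ℝ E]
    [MeasurableSpace Y] {ν : Measure Y} {p : ℝ≥0∞} {S : X → Y} (hS : MeasurePreserving S μ ν)
    (f : Lp E p ν) : ∫ x, Lp.compMeasurePreserving S hS f x ∂μ = ∫ y, f y ∂ν := calc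
  _ = ∫ x, f (S x) ∂μ := integral_congr_ae (Lp.coeFn_compMeasurePreserving f hS)
  _ = ∫ y, f y ∂(μ.map S) := (integral_map hS.aemeasurable <| by
    rw [hS.map_eq]; exact Lp.aestronglyMeasurable f).symm
  _ = ∫ y, f y ∂ν := by rw [hS.map_eq]

lemma enorm_toLp_sq {Y : Type*} [TopologicalSpace Y] [CompactSpace Y] [MeasurableSpace Y]
    [BorelSpace Y] (ρ : Measure Y) [IsFiniteMeasure ρ] (φ : C(Y, 𝕜)) :
    ‖(ContinuousMap.toLp 2 ρ 𝕜 φ : Lp 𝕜 2 ρ)‖ₑ ^ 2 = ∫⁻ y, ‖φ y‖ₑ ^ 2 ∂ρ := by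
  rw [Lp.enorm_def, eLpNorm_congr_ae (ContinuousMap.coeFn_toLp ρ φ)]
  simpa using eLpNorm_nnreal_pow_eq_lintegral (μ := ρ) (f := φ) (two_ne_zero : (2 : ℝ≥0) ≠ 0)

end L2

/-- `τ` is a spectral measure of the vector `g` under the unitary operator `V`: the Fourier
coefficients of `τ` are the autocorrelations `⟪Vⁿ g, g⟫`. Finiteness of `τ` is not part of the
definition; since the integral is `0` when `τ` is infinite, it can only fail for `g = 0`. -/
def HasSpectralMeasure {E : Type*} [NormedAddCommGroup E] [InnerProductSpace ℂ E] {p : ℝ}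
    (V : E ≃ₗᵢ[ℂ] E) (g : E) (τ : Measure (AddCircle p)) : Prop :=
  ∀ n : ℤ, ⟪(V ^ n) g, g⟫_ℂ = ∫ z, fourier n z ∂τ

namespace HasSpectralMeasure

variable {E F : Type*} [NormedAddCommGroup E] [InnerProductSpace ℂ E]
  [NormedAddCommGroup F] [InnerProductSpace ℂ F] {p : ℝ}
  {V : E ≃ₗᵢ[ℂ] E} {W : F ≃ₗᵢ[ℂ] F} {g : E} {τ ν : Measure (AddCircle p)}

lemma norm_sq_eq (hτ : HasSpectralMeasure V g τ) : ‖g‖ ^ 2 = τ.real Set.univ := by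
  rw [← Complex.ofReal_inj]
  simpa [inner_self_eq_norm_sq_to_K] using hτ 0

lemma isFiniteMeasure (hτ : HasSpectralMeasure V g τ) (hg : g ≠ 0) : IsFiniteMeasure τ := by
  by_contra hinf
  rw [isFiniteMeasure_iff, not_lt_top_iff] at hinf
  exact hg (by simpa [Measure.real, hinf] using hτ.norm_sq_eq)

lemma measure_eq_zero_iff (hτ : HasSpectralMeasure V g τ) [IsFiniteMeasure τ] :
    τ = 0 ↔ g = 0 := by
  rw [← norm_eq_zero, ← sq_eq_zero_iff, hτ.norm_sq_eq, measureReal_eq_zero_iff,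
    Measure.measure_univ_eq_zero]

lemma neg_of_semiconj (hτ : HasSpectralMeasure V g τ) {J : E → E}
    (hJ : ∀ x y, ⟪J x, J y⟫_ℂ = ⟪y, x⟫_ℂ) (hJV : Function.Semiconj J V V) :
    HasSpectralMeasure V (J g) τ.neg := fun n => calc
  ⟪(V ^ n) (J g), J g⟫_ℂ = ⟪J ((V ^ n) g), J g⟫_ℂ := by rw [semiconj_zpow hJV n g]
  _ = ⟪(V ^ (-n)) g, g⟫_ℂ := by
    rw [hJ, zpow_neg, ← LinearIsometryEquiv.inner_map_map (V ^ n) _ g,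
      LinearIsometryEquiv.coe_inv, LinearIsometryEquiv.apply_symm_apply]
  _ = ∫ z, fourier n (-z) ∂τ := by simp only [hτ (-n), fourier_apply, smul_neg, neg_smul]
  _ = ∫ z, fourier n z ∂τ.neg := (integral_map_equiv (MeasurableEquiv.neg _) _).symm

lemma one (g : E) : HasSpectralMeasure (p := p) 1 g
    (ENNReal.ofReal (‖g‖ ^ 2) • Measure.dirac 0) := fun n => by
  rw [one_zpow, LinearIsometryEquiv.coe_one, id_eq, inner_self_eq_norm_sq_to_K,
    integral_smul_measure, integral_dirac, fourier_eval_zero,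
    ENNReal.toReal_ofReal (by positivity)]
  simp

variable [Fact (0 < p)]

lemma norm_linearCombination_eq [IsFiniteMeasure τ] (hτ : HasSpectralMeasure V g τ)
    (c : ℤ →₀ ℂ) :
    ‖Finsupp.linearCombination ℂ (fun n : ℤ => (V ^ (-n)) g) c‖ =
      ‖ContinuousMap.toLp 2 τ ℂ (Finsupp.linearCombination ℂ (fourier (T := p)) c)‖ := by
  rw [← ContinuousLinearMap.coe_coe, Finsupp.apply_linearCombination]
  refine norm_linearCombination_eq_of_inner_eq (fun m n => ?_) c
  calc ⟪(V ^ (-m)) g, (V ^ (-n)) g⟫_ℂ = ⟪(V ^ (n - m)) g, g⟫_ℂ := by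
        rw [← LinearIsometryEquiv.inner_map_map (V ^ (-n)) ((V ^ (n - m)) g),
          ← Function.comp_apply (f := ⇑(V ^ (-n))), ← LinearIsometryEquiv.coe_mul, ← zpow_add]
        congr; ring
    _ = ∫ z, fourier (n - m) z ∂τ := hτ (n - m)
    _ = _ := by
      simp only [Function.comp_apply, ContinuousLinearMap.coe_coe, ContinuousMap.inner_toLp,
        sub_eq_add_neg, fourier_add, fourier_neg]

lemma norm_toLp_le [IsFiniteMeasure τ] [IsFiniteMeasure ν] {A : E →L[ℂ] F}
    (hτ : HasSpectralMeasure V g τ) (hA : Function.Semiconj A V W)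
    (hν : HasSpectralMeasure W (A g) ν) (φ : C(AddCircle p, ℂ)) :
    ‖(ContinuousMap.toLp 2 ν ℂ φ : Lp ℂ 2 ν)‖ ≤
      ‖A‖ * ‖(ContinuousMap.toLp 2 τ ℂ φ : Lp ℂ 2 τ)‖ := by
  have hφ : φ ∈ closure (LinearMap.range (Finsupp.linearCombination ℂ (fourier (T := p))) :
      Set C(AddCircle p, ℂ)) := by
    rw [Finsupp.range_linearCombination, ← Submodule.topologicalClosure_coe,
      span_fourier_closure_eq_top]
    trivial
  refine le_on_closure (fun ψ hψ => ?_) (ContinuousMap.toLp 2 ν ℂ).continuous.norm.continuousOn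
    ((ContinuousMap.toLp 2 τ ℂ).continuous.norm.const_mul ‖A‖).continuousOn hφ
  obtain ⟨c, rfl⟩ := hψ
  have hAc : A (Finsupp.linearCombination ℂ (fun n : ℤ => (V ^ (-n)) g) c) =
      Finsupp.linearCombination ℂ (fun n : ℤ => (W ^ (-n)) (A g)) c := by
    rw [← ContinuousLinearMap.coe_coe, Finsupp.apply_linearCombination]
    congr with n
    exact semiconj_zpow hA (-n) g
  rw [← hτ.norm_linearCombination_eq, ← hν.norm_linearCombination_eq, ← hAc]
  exact A.le_opNorm _

lemma map_le [IsFiniteMeasure τ] [IsFiniteMeasure ν] {A : E →L[ℂ] F}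
    (hτ : HasSpectralMeasure V g τ) (hA : Function.Semiconj A V W)
    (hν : HasSpectralMeasure W (A g) ν) : ν ≤ ‖A‖ₑ ^ 2 • τ := by
  have : IsFiniteMeasure (‖A‖ₑ ^ 2 • τ) := Measure.smul_finite τ (by finiteness)
  refine measure_le_of_forall_lintegral_le fun f => ?_
  let φ : C(AddCircle p, ℂ) := ⟨fun z => ((NNReal.sqrt (f z) : ℝ) : ℂ), by fun_prop⟩
  have hφ (z : AddCircle p) : (f z : ℝ≥0∞) = ‖φ z‖ₑ ^ 2 := by
    rw [ContinuousMap.coe_mk, enorm_eq_nnnorm, Complex.nnnorm_real, NNReal.nnnorm_eq,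
      ← ENNReal.coe_pow, NNReal.sq_sqrt]
  have hle : ‖(ContinuousMap.toLp 2 ν ℂ φ : Lp ℂ 2 ν)‖ₑ ≤
      ‖A‖ₑ * ‖(ContinuousMap.toLp 2 τ ℂ φ : Lp ℂ 2 τ)‖ₑ := by
    simpa only [← ofReal_norm, ← ENNReal.ofReal_mul (norm_nonneg A)] using
      ENNReal.ofReal_le_ofReal (hτ.norm_toLp_le hA hν φ)
  calc ∫⁻ z, f z ∂ν = ‖(ContinuousMap.toLp 2 ν ℂ φ : Lp ℂ 2 ν)‖ₑ ^ 2 := by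
        simp only [hφ, enorm_toLp_sq]
    _ ≤ (‖A‖ₑ * ‖(ContinuousMap.toLp 2 τ ℂ φ : Lp ℂ 2 τ)‖ₑ) ^ 2 := by gcongr
    _ = ∫⁻ z, f z ∂(‖A‖ₑ ^ 2 • τ) := by
        rw [lintegral_smul_measure, smul_eq_mul, mul_pow, enorm_toLp_sq]
        simp only [hφ]

lemma absolutelyContinuous_map [IsFiniteMeasure ν] {A : E →L[ℂ] F}
    (hτ : HasSpectralMeasure V g τ) (hA : Function.Semiconj A V W)
    (hν : HasSpectralMeasure W (A g) ν) : ν ≪ τ := by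
  by_cases hg : g = 0
  · rw [hν.measure_eq_zero_iff.2 (by rw [hg, map_zero])]
    exact Measure.AbsolutelyContinuous.zero τ
  · have := hτ.isFiniteMeasure hg
    exact Measure.absolutelyContinuous_of_le_smul (hτ.map_le hA hν)

lemma absolutelyContinuous {τ' : Measure (AddCircle p)} [IsFiniteMeasure τ']
    (hτ : HasSpectralMeasure V g τ) (hτ' : HasSpectralMeasure V g τ') : τ' ≪ τ :=
  hτ.absolutelyContinuous_map (A := .id ℂ E) (fun _ => rfl) hτ'

lemma map_eq_zero_of_mutuallySingular {A : E →L[ℂ] F}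
    (hτ : HasSpectralMeasure V g τ) (hA : Function.Semiconj A V W)
    (hν : HasSpectralMeasure W (A g) ν) (hsing : ν ⟂ₘ τ) : A g = 0 := by
  by_contra hAg
  have := hν.isFiniteMeasure hAg
  exact hAg <| hν.measure_eq_zero_iff.1 <|
    Measure.eq_zero_of_absolutelyContinuous_of_mutuallySingular
      (hτ.absolutelyContinuous_map hA hν) hsing

lemma map_eq_zero_of_invariant (hτ : HasSpectralMeasure V g τ) {l : E →L[ℂ] ℂ}
    (hl : ∀ x, l (V x) = l x) (h0 : τ {0} = 0) : l g = 0 :=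
  hτ.map_eq_zero_of_mutuallySingular (W := 1) hl (one (l g))
    ⟨{0}ᶜ, (measurableSet_singleton 0).compl, by simp, by simpa using h0⟩

end HasSpectralMeasure

theorem intertwiner_vanishes_of_spectral_singularity_general
    {X : Type*} [MeasurableSpace X] {μ : Measure X} [IsFiniteMeasure μ]
    {S : X → X} (hS : MeasurePreserving S μ μ) {U : Lp ℂ 2 μ ≃ₗᵢ[ℂ] Lp ℂ 2 μ}
    (hU : ∀ f, U f = Lp.compMeasurePreserving S hS f)
    {p : ℝ} [Fact (0 < p)] {σ : Measure (AddCircle p)} [IsFiniteMeasure σ]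
    (hspec : ∀ f : Lp ℂ 2 μ, ∫ x, f x ∂μ = 0 →
      ∃ σf : Measure (AddCircle p), σf ≪ σ ∧ HasSpectralMeasure U f σf)
    (hmax : ∃ f : Lp ℂ 2 μ, ∫ x, f x ∂μ = 0 ∧ HasSpectralMeasure U f σ)
    {n : ℕ} (hn : Even n) (hsing : σ ⟂ₘ σ.conv^[n] σ)
    {E : Type*} [NormedAddCommGroup E] [InnerProductSpace ℂ E] {V : E ≃ₗᵢ[ℂ] E}
    {P : E →L[ℂ] Lp ℂ 2 μ} (hP : Function.Semiconj P V U)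
    {g : E} {τ : Measure (AddCircle p)} (hτσ : τ ≪ σ.conv^[n] σ)
    (hτ : HasSpectralMeasure V g τ) : P g = 0 := by
  obtain ⟨f, hf0, hf⟩ := hmax
  have hneg : σ.neg ≪ σ := by
    obtain ⟨σ', hσ', hstar⟩ := hspec (star f) (by rw [integral_coeFn_star, hf0, star_zero])
    have hreflect : HasSpectralMeasure U (star f) σ.neg :=
      hf.neg_of_semiconj inner_star_star fun h => by
        simp only [hU, compMeasurePreserving_star]
    exact (hstar.absolutelyContinuous hreflect).trans hσ'
  have := nullSingletonClass_of_mutuallySingular_conv_iterate hneg hn hsing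
  have := nullSingletonClass_conv_iterate σ n
  have hmean : ∫ x, P g x ∂μ = 0 := by
    rw [← inner_lpConst_one]
    refine hτ.map_eq_zero_of_invariant
      (l := (innerSL ℂ (Lp.const 2 μ (1 : ℂ))).comp P) (fun x => ?_) (hτσ (measure_singleton 0))
    simp only [ContinuousLinearMap.comp_apply, innerSL_apply_apply, inner_lpConst_one, hP.eq, hU,
      integral_compMeasurePreserving]
  obtain ⟨ν, hνσ, hν⟩ := hspec (P g) hmean
  exact hτ.map_eq_zero_of_mutuallySingular hP hν (hsing.mono_ac hνσ hτσ)

/-- If the maximal spectral type `σ` of a mixing automorphism `T` (on the mean-zero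
subspace `H`) is mutually singular with `σ^{*5}`, then every operator
`P : L²(μ)^{⊗5} → L²(μ)` with `P T^{⊗5} = T P` and `P* H ⊆ H^{⊗5}` vanishes on `H^{⊗5}`. -/
theorem intertwiner_vanishes_of_spectral_singularity
    {X : Type*} [MeasurableSpace X] [StandardBorelSpace X]
    (μ : Measure X) [IsProbabilityMeasure μ]
    (T : X ≃ᵐ X) (hT : MeasurePreserving T μ μ)
    (hmix : ∀ A B : Set X, MeasurableSet A → MeasurableSet B →
      Tendsto (fun m : ℕ => μ (A ∩ (⇑T)^[m] '' B)) atTop (nhds (μ A * μ B)))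
    -- the unitary Koopman operators of T on L²(μ) and of T×⋯×T on L²(μ^{⊗5})
    (U : Lp ℂ 2 μ ≃ₗᵢ[ℂ] Lp ℂ 2 μ)
    (hU : ∀ f : Lp ℂ 2 μ, (U f : X → ℂ) =ᵐ[μ] fun x => f (T.symm x))
    (U₅ : Lp ℂ 2 (Measure.pi fun _ : Fin 5 => μ) ≃ₗᵢ[ℂ] Lp ℂ 2 (Measure.pi fun _ : Fin 5 => μ))
    (hU₅ : ∀ g : Lp ℂ 2 (Measure.pi fun _ : Fin 5 => μ),
      (U₅ g : (Fin 5 → X) → ℂ) =ᵐ[Measure.pi fun _ : Fin 5 => μ]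
        fun p => g fun i => T.symm (p i))
    -- σ : the maximal spectral type of U on the mean-zero subspace H
    (σ : Measure (AddCircle (1 : ℝ))) [IsFiniteMeasure σ]
    (hspec : ∀ f : Lp ℂ 2 μ, ∫ x, f x ∂μ = 0 →
      ∃ σf : Measure (AddCircle (1 : ℝ)), σf ≪ σ ∧
        ∀ n : ℤ, ⟪(U ^ n) f, f⟫_ℂ = ∫ z, fourier n z ∂σf)
    (hmax : ∃ f : Lp ℂ 2 μ, ∫ x, f x ∂μ = 0 ∧
      ∀ n : ℤ, ⟪(U ^ n) f, f⟫_ℂ = ∫ z, fourier n z ∂σ)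
    -- the spectral type of U^{⊗5} on H^{⊗5} is absolutely continuous w.r.t. σ^{*5}
    (hspec5 : ∀ g : Lp ℂ 2 (Measure.pi fun _ : Fin 5 => μ),
      (∀ j : Fin 5, ∀ᵐ p ∂(Measure.pi fun _ : Fin 5 => μ),
        ∫ x, (g : (Fin 5 → X) → ℂ) (Function.update p j x) ∂μ = 0) →
      ∃ τ : Measure (AddCircle (1 : ℝ)), τ ≪ σ.conv (σ.conv (σ.conv (σ.conv σ))) ∧
        ∀ n : ℤ, ⟪(U₅ ^ n) g, g⟫_ℂ = ∫ z, fourier n z ∂τ)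
    -- σ is mutually singular with its fifth convolution power
    (hsing : σ ⟂ₘ σ.conv (σ.conv (σ.conv (σ.conv σ))))
    -- P : an intertwining operator with P* H ⊆ H^{⊗5}
    (P : Lp ℂ 2 (Measure.pi fun _ : Fin 5 => μ) →L[ℂ] Lp ℂ 2 μ)
    (hPint : ∀ g, P (U₅ g) = U (P g))
    (hPH : ∀ f : Lp ℂ 2 μ, ∫ x, f x ∂μ = 0 → ∀ j : Fin 5,
      ∀ᵐ p ∂(Measure.pi fun _ : Fin 5 => μ),
        ∫ x, (ContinuousLinearMap.adjoint P f) (Function.update p j x) ∂μ = 0) :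
    ∀ g : Lp ℂ 2 (Measure.pi fun _ : Fin 5 => μ),
      (∀ j : Fin 5, ∀ᵐ p ∂(Measure.pi fun _ : Fin 5 => μ),
        ∫ x, (g : (Fin 5 → X) → ℂ) (Function.update p j x) ∂μ = 0) →
      P g = 0 := by
  intro g hg
  obtain ⟨τ, hτσ, hτ⟩ := hspec5 g hg
  exact intertwiner_vanishes_of_spectral_singularity_general (hT.symm T)
    (fun f => Lp.ext <| (hU f).trans (Lp.coeFn_compMeasurePreserving f (hT.symm T)).symm)
    hspec hmax (even_two_mul 2) hsing hPint hτσ hτ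
end

section
/- If the maximal spectral type σ of a mixing automorphism T has, for some m ≠ n, mutually singular convolution powers σ^{*m} and σ^{*n}, then σ is singular with respect to Lebesgue measure on the circle. -/
open MeasureTheory Filter
open scoped InnerProductSpace

/-- The `m`-fold convolution power of a measure on the circle. -/
noncomputable def convPow (σ : Measure (AddCircle (1 : ℝ))) : ℕ → Measure (AddCircle (1 : ℝ))
  | 0 => Measure.dirac 0
  | n + 1 => (convPow σ n).conv σ

/-!
If `0` were not in the support of `σ`, then `U - 1` would be bounded below on the mean-zero
functions. This is impossible when there are sets of arbitrarily small positive measure: the sum of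
the first `K` translates of the indicator `u` of such a set has norm at least `√K ‖u‖` because all
correlations are nonnegative, it is nearly orthogonal to the constants because the set is small,
and `U` moves it only by `2 ‖u‖` because the sum telescopes.

If `σ` is not singular, then neither is `ν = σ^{*m}`, and by Steinhaus' theorem `ν` is not singular
to its translates by elements close to `0`. Since `σ^{*k}` charges every neighbourhood of `0`, it
follows that `σ^{*(k+m)} = σ^{*k} * ν` is not singular to `ν`.
-/

open Topology
open scoped ENNReal Pointwise

theorem exists_restrict_absolutelyContinuous_of_not_mutuallySingular {α : Type*}
    [MeasurableSpace α] {μ ν : Measure α} [SFinite μ] [SigmaFinite ν] (h : ¬ μ ⟂ₘ ν) :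
    ∃ E, MeasurableSet E ∧ 0 < ν E ∧ ν.restrict E ≪ μ := by
  have hE : MeasurableSet {x | μ.rnDeriv ν x ≠ 0} :=
    μ.measurable_rnDeriv ν (measurableSet_singleton 0).compl
  refine ⟨{x | μ.rnDeriv ν x ≠ 0}, hE, pos_iff_ne_zero.2 fun h0 => h ?_, ?_⟩
  · rw [← Measure.rnDeriv_eq_zero]
    exact ae_iff.2 h0
  · refine Measure.AbsolutelyContinuous.mk fun s hs hμs => ?_
    have hdensity : ν.withDensity (μ.rnDeriv ν) s = 0 :=
      (Measure.withDensity_rnDeriv_le μ ν).absolutelyContinuous hμs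
    rw [Measure.restrict_apply hs, Set.inter_comm]
    exact (withDensity_apply_eq_zero (μ.measurable_rnDeriv ν)).1 hdensity

section Convolution

variable {M : Type*} [AddMonoid M] [MeasurableSpace M] [MeasurableAdd₂ M]

theorem conv_apply_eq_zero_iff {μ ν : Measure M} [SFinite ν] {A : Set M} (hA : MeasurableSet A) :
    (μ.conv ν) A = 0 ↔ ∀ᵐ x ∂μ, ν ((x + ·) ⁻¹' A) = 0 := by
  rw [Measure.conv, Measure.map_apply measurable_add hA,
    Measure.measure_prod_null (measurable_add hA)]
  rfl

theorem ae_map_add_left_mutuallySingular_of_conv {μ ν τ : Measure M} [SFinite ν]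
    (h : μ.conv ν ⟂ₘ τ) : ∀ᵐ x ∂μ, ν.map (x + ·) ⟂ₘ τ := by
  obtain ⟨A, hA, hconv, hτ⟩ := h
  filter_upwards [(conv_apply_eq_zero_iff hA).1 hconv] with x hx
  exact ⟨A, hA, by rwa [Measure.map_apply (measurable_const_add x) hA], hτ⟩

theorem not_conv_mutuallySingular {μ ν τ : Measure M} [SFinite ν] [τ.IsAddLeftInvariant]
    (hμ : μ ≠ 0) (hν : ¬ ν ⟂ₘ τ) : ¬ μ.conv ν ⟂ₘ τ := by
  intro h
  have : (ae μ).NeBot := ae_neBot.2 hμ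
  obtain ⟨x, hx⟩ := (ae_map_add_left_mutuallySingular_of_conv h).exists
  obtain ⟨A, hA, hνA, hτA⟩ := hx
  rw [← map_add_left_eq_self τ x, Measure.map_apply (measurable_const_add x) hA.compl] at hτA
  rw [Measure.map_apply (measurable_const_add x) hA] at hνA
  exact hν ⟨(x + ·) ⁻¹' A, measurable_const_add x hA, hνA, hτA⟩

theorem add_mem_support_conv [TopologicalSpace M] [ContinuousAdd M] [OpensMeasurableSpace M]
    {μ ν : Measure M} [SFinite ν] {x y : M} (hx : x ∈ μ.support)
    (hy : y ∈ ν.support) : x + y ∈ (μ.conv ν).support := by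
  by_contra hxy
  obtain ⟨V, hVopen, hVxy, hV⟩ : ∃ V, IsOpen V ∧ x + y ∈ V ∧ μ.conv ν V = 0 := by
    simpa [Measure.support_eq_forall_isOpen, and_assoc, and_left_comm] using hxy
  have hnear : {z | z + y ∈ V} ∈ 𝓝 x :=
    (hVopen.preimage (continuous_add_const y)).mem_nhds hVxy
  refine ((Measure.mem_support_iff_forall x).1 hx _ hnear).ne' (measure_mono_null ?_
    ((conv_apply_eq_zero_iff hVopen.measurableSet).1 hV))
  intro z hz
  exact ((Measure.mem_support_iff_forall y).1 hy _
    ((hVopen.preimage (continuous_const_add z)).mem_nhds hz)).ne'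

end Convolution

section Translation

variable {G : Type*} [AddGroup G] [TopologicalSpace G] [IsTopologicalAddGroup G]
  [LocallyCompactSpace G] [T2Space G] [MeasurableSpace G] [BorelSpace G]

theorem eventually_measure_inter_preimage_add_pos {τ : Measure G} [τ.IsAddLeftInvariant]
    [IsFiniteMeasureOnCompacts τ] [τ.InnerRegular] {E : Set G} (hE : MeasurableSet E)
    (hpos : 0 < τ E) : ∀ᶠ y in 𝓝 0, 0 < τ (E ∩ (y + ·) ⁻¹' E) := by
  obtain ⟨K, hKE, hK, hKpos⟩ := hE.exists_lt_isCompact hpos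
  filter_upwards [(tendsto_measure_vadd_sdiff_isCompact_isClosed (μ := τ) hK
    hK.isClosed).eventually_lt_const hKpos] with y hy
  have hinter : 0 < τ ((y +ᵥ K) ∩ K) := by
    refine pos_iff_ne_zero.2 fun h0 => hy.ne ?_
    rw [measure_sdiff_null' h0, measure_vadd]
  rw [← measure_preimage_add τ y] at hinter
  refine hinter.trans_le (measure_mono ?_)
  rintro x ⟨hx, hxK⟩
  exact ⟨hKE ((Set.vadd_mem_vadd_set_iff).1 hx), hKE hxK⟩

theorem eventually_not_map_add_left_mutuallySingular {ν τ : Measure G} [SFinite ν] [SigmaFinite τ]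
    [τ.IsAddLeftInvariant] [IsFiniteMeasureOnCompacts τ] [τ.InnerRegular] (h : ¬ ν ⟂ₘ τ) :
    ∀ᶠ y in 𝓝 0, ¬ ν.map (y + ·) ⟂ₘ ν := by
  obtain ⟨E, hE, hEpos, hEν⟩ := exists_restrict_absolutelyContinuous_of_not_mutuallySingular h
  filter_upwards [eventually_measure_inter_preimage_add_pos hE hEpos] with y hy hsing
  obtain ⟨A, hA, hA0, hA1⟩ := hsing.mono_ac (hEν.map (measurable_const_add y)) hEν
  rw [Measure.map_apply (measurable_const_add y) hA,
    Measure.restrict_apply (measurable_const_add y hA)] at hA0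
  rw [Measure.restrict_apply hA.compl, ← measure_preimage_add τ y] at hA1
  refine hy.ne' (measure_mono_null ?_ (measure_union_null hA0 hA1))
  rintro x ⟨hxE, hyxE⟩
  by_cases hyx : y + x ∈ A
  · exact Or.inl ⟨hyx, hxE⟩
  · exact Or.inr ⟨hyx, hyxE⟩

theorem not_conv_mutuallySingular_self [MeasurableAdd₂ G] {μ ν τ : Measure G} [SFinite ν]
    [SigmaFinite τ] [τ.IsAddLeftInvariant] [IsFiniteMeasureOnCompacts τ] [τ.InnerRegular]
    (hμ : 0 ∈ μ.support) (hν : ¬ ν ⟂ₘ τ) : ¬ μ.conv ν ⟂ₘ ν := fun h =>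
  ((Measure.mem_support_iff_forall 0).1 hμ _
    (eventually_not_map_add_left_mutuallySingular hν)).ne'
    (by simpa [ae_iff] using ae_map_add_left_mutuallySingular_of_conv h)

end Translation

section ConvPow

variable {σ : Measure (AddCircle (1 : ℝ))} [SFinite σ]

instance sFinite_convPow (n : ℕ) : SFinite (convPow σ n) := by
  induction n with
  | zero => rw [convPow]; infer_instance
  | succ n ih => rw [convPow]; infer_instance

theorem convPow_add (k m : ℕ) : convPow σ (k + m) = (convPow σ k).conv (convPow σ m) := by
  induction m with
  | zero => simp only [add_zero, convPow, Measure.conv_dirac_zero]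
  | succ m ih => rw [← add_assoc, convPow, ih, convPow, Measure.conv_assoc]

theorem zero_mem_support_convPow (hσ : 0 ∈ σ.support) (n : ℕ) : 0 ∈ (convPow σ n).support := by
  induction n with
  | zero =>
    rw [convPow, Measure.mem_support_iff_forall]
    exact fun V hV => by simp [mem_of_mem_nhds hV]
  | succ n ih => simpa only [convPow, add_zero] using add_mem_support_conv ih hσ

theorem not_convPow_succ_mutuallySingular_volume (hσ : ¬ σ ⟂ₘ volume) (n : ℕ) :
    ¬ convPow σ (n + 1) ⟂ₘ volume := by
  induction n with
  | zero => simpa only [convPow, Measure.dirac_zero_conv] using hσ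
  | succ n ih =>
    have hne : convPow σ (n + 1) ≠ 0 := by
      intro h0
      exact ih (by rw [h0]; exact Measure.MutuallySingular.zero_left)
    exact not_conv_mutuallySingular hne hσ

theorem not_convPow_mutuallySingular_convPow (h0 : 0 ∈ σ.support) (hσ : ¬ σ ⟂ₘ volume)
    {m n : ℕ} (hm : 1 ≤ m) (hmn : m < n) : ¬ convPow σ m ⟂ₘ convPow σ n := by
  obtain ⟨k, rfl⟩ := Nat.exists_eq_add_of_le' hmn.le
  obtain ⟨m, rfl⟩ := Nat.exists_eq_add_of_le' hm
  rw [convPow_add k (m + 1)]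
  exact fun h => not_conv_mutuallySingular_self (zero_mem_support_convPow h0 k)
    (not_convPow_succ_mutuallySingular_volume hσ m) h.symm

end ConvPow


section AlmostInvariant

variable {𝕜 E : Type*} [RCLike 𝕜] [NormedAddCommGroup E] [InnerProductSpace 𝕜 E]

theorem sum_norm_sq_le_norm_sum_sq {ι : Type*} (s : Finset ι) {x : ι → E}
    (hx : ∀ i j, 0 ≤ RCLike.re ⟪x i, x j⟫_𝕜) : ∑ i ∈ s, ‖x i‖ ^ 2 ≤ ‖∑ i ∈ s, x i‖ ^ 2 := by
  have hexpand : ‖∑ i ∈ s, x i‖ ^ 2 = ∑ i ∈ s, ∑ j ∈ s, RCLike.re ⟪x i, x j⟫_𝕜 := by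
    simp only [← inner_self_eq_norm_sq (𝕜 := 𝕜), sum_inner, inner_sum, map_sum]
    exact Finset.sum_comm
  rw [hexpand]
  gcongr with i hi
  rw [← inner_self_eq_norm_sq (𝕜 := 𝕜)]
  exact Finset.single_le_sum (f := fun j => RCLike.re ⟪x i, x j⟫_𝕜) (fun j _ => hx i j) hi

theorem norm_sub_inner_smul_sq {v : E} (hv : ‖v‖ = 1) (x : E) :
    ‖x - ⟪v, x⟫_𝕜 • v‖ ^ 2 = ‖x‖ ^ 2 - ‖⟪v, x⟫_𝕜‖ ^ 2 := by
  have horth : ⟪⟪v, x⟫_𝕜 • v, x - ⟪v, x⟫_𝕜 • v⟫_𝕜 = 0 := by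
    rw [inner_smul_left, inner_sub_right, inner_smul_right, inner_self_eq_norm_sq_to_K, hv,
      RCLike.ofReal_one, one_pow, mul_one, sub_self, mul_zero]
  have hpythagoras := norm_add_sq_eq_norm_sq_add_norm_sq_of_inner_eq_zero _ _ horth
  rw [add_sub_cancel, norm_smul, hv, mul_one] at hpythagoras
  linarith

theorem inner_iterate_of_fixed (U : E →ₗᵢ[𝕜] E) {v : E} (hv : U v = v) (u : E) (j : ℕ) :
    ⟪v, U^[j] u⟫_𝕜 = ⟪v, u⟫_𝕜 := by
  induction j with
  | zero => rfl
  | succ j ih =>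
    rw [Function.iterate_succ_apply', ← ih]
    conv_lhs => rw [← hv]
    exact U.inner_map_map v _

theorem norm_iterate (U : E →ₗᵢ[𝕜] E) (u : E) (j : ℕ) : ‖U^[j] u‖ = ‖u‖ := by
  induction j with
  | zero => rfl
  | succ j ih => rw [Function.iterate_succ_apply', U.norm_map, ih]

theorem norm_apply_sum_iterate_sub_le (U : E →ₗᵢ[𝕜] E) (u : E) (K : ℕ) :
    ‖U (∑ j ∈ Finset.range K, U^[j] u) - ∑ j ∈ Finset.range K, U^[j] u‖ ≤ 2 * ‖u‖ := by
  have htelescope : U (∑ j ∈ Finset.range K, U^[j] u) - ∑ j ∈ Finset.range K, U^[j] u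
      = U^[K] u - u := by
    rw [map_sum, ← Finset.sum_sub_distrib]
    simpa only [Function.iterate_succ_apply', Function.iterate_zero, id_eq] using
      Finset.sum_range_sub (fun j => U^[j] u) K
  rw [htelescope]
  linarith [norm_sub_le (U^[K] u) u, norm_iterate U u K]

theorem sq_mul_le_of_gap {U : E →ₗᵢ[𝕜] E} {v : E} (hv : ‖v‖ = 1) (hUv : U v = v) {δ : ℝ}
    (hδ : 0 ≤ δ) (hgap : ∀ x, ⟪v, x⟫_𝕜 = 0 → δ * ‖x‖ ≤ ‖U x - x‖) {u : E}
    (hu : ∀ i j, 0 ≤ RCLike.re ⟪U^[i] u, U^[j] u⟫_𝕜) (K : ℕ) :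
    δ ^ 2 * (K * ‖u‖ ^ 2 - (K * ‖⟪v, u⟫_𝕜‖) ^ 2) ≤ 4 * ‖u‖ ^ 2 := by
  set F := ∑ j ∈ Finset.range K, U^[j] u
  set c := ⟪v, F⟫_𝕜 with hc
  have hcu : ‖c‖ = K * ‖⟪v, u⟫_𝕜‖ := by
    simp [c, F, inner_sum, inner_iterate_of_fixed U hUv]
  have hF : K * ‖u‖ ^ 2 ≤ ‖F‖ ^ 2 := by
    simpa [norm_iterate] using sum_norm_sq_le_norm_sum_sq (Finset.range K) hu
  have horth : ⟪v, F - c • v⟫_𝕜 = 0 := by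
    simp [inner_sub_right, inner_smul_right, inner_self_eq_norm_sq_to_K, hv, hc]
  have hbound : δ * ‖F - c • v‖ ≤ 2 * ‖u‖ := by
    refine (hgap _ horth).trans ?_
    rw [map_sub, map_smul, hUv, sub_sub_sub_cancel_right]
    exact norm_apply_sum_iterate_sub_le U u K
  calc δ ^ 2 * (K * ‖u‖ ^ 2 - (K * ‖⟪v, u⟫_𝕜‖) ^ 2)
      ≤ δ ^ 2 * (‖F‖ ^ 2 - ‖c‖ ^ 2) := by rw [hcu]; gcongr
    _ = (δ * ‖F - c • v‖) ^ 2 := by rw [mul_pow, hc, norm_sub_inner_smul_sq hv]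
    _ ≤ (2 * ‖u‖) ^ 2 := by gcongr
    _ = 4 * ‖u‖ ^ 2 := by ring

end AlmostInvariant

section Koopman

variable {X : Type*} [MeasurableSpace X] {μ : Measure X} {S : X → X} {𝕜 : Type*} [RCLike 𝕜]

theorem re_inner_iterate_indicatorConstLp_nonneg [IsFiniteMeasure μ]
    (hS : MeasurePreserving S μ μ) {B : Set X} (hB : MeasurableSet B) (i j : ℕ) :
    0 ≤ RCLike.re ⟪(Lp.compMeasurePreservingₗᵢ 𝕜 S hS)^[i]
        (indicatorConstLp 2 hB (measure_ne_top μ B) (1 : 𝕜)),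
      (Lp.compMeasurePreservingₗᵢ 𝕜 S hS)^[j]
        (indicatorConstLp 2 hB (measure_ne_top μ B) (1 : 𝕜))⟫_𝕜 := by
  have hcoe : ⇑(Lp.compMeasurePreservingₗᵢ (E := 𝕜) (p := 2) 𝕜 S hS) =
      Lp.compMeasurePreserving S hS := rfl
  rw [hcoe, Lp.compMeasurePreserving_iterate, Lp.compMeasurePreserving_iterate,
    Lp.indicatorConstLp_compMeasurePreserving, Lp.indicatorConstLp_compMeasurePreserving,
    L2.inner_indicatorConstLp_one_indicatorConstLp_one, RCLike.ofReal_re]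
  exact measureReal_nonneg

theorem sq_mul_sub_sq_mul_measureReal_le_of_gap [IsProbabilityMeasure μ]
    (hS : MeasurePreserving S μ μ) {δ : ℝ} (hδ : 0 ≤ δ)
    (hgap : ∀ f : Lp 𝕜 2 μ, ∫ x, f x ∂μ = 0 →
      δ * ‖f‖ ≤ ‖Lp.compMeasurePreserving S hS f - f‖)
    {B : Set X} (hB : MeasurableSet B) (hB0 : 0 < μ.real B) (K : ℕ) :
    δ ^ 2 * (K - K ^ 2 * μ.real B) ≤ 4 := by
  set one : Lp 𝕜 2 μ := indicatorConstLp 2 .univ (measure_ne_top μ _) 1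
  have hone : ‖one‖ = 1 := by
    rw [norm_indicatorConstLp two_ne_zero ENNReal.ofNat_ne_top]
    simp
  have hfixed : Lp.compMeasurePreservingₗᵢ 𝕜 S hS one = one :=
    Lp.indicatorConstLp_compMeasurePreserving .univ _ _ hS
  set u : Lp 𝕜 2 μ := indicatorConstLp 2 hB (measure_ne_top μ B) 1
  have hu : ‖u‖ ^ 2 = μ.real B := by
    rw [← inner_self_eq_norm_sq (𝕜 := 𝕜), L2.inner_indicatorConstLp_one_indicatorConstLp_one,
      Set.inter_self, RCLike.ofReal_re]
  have hmean : ⟪one, u⟫_𝕜 = (μ.real B : 𝕜) := by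
    rw [L2.inner_indicatorConstLp_one_indicatorConstLp_one, Set.univ_inter]
  have hmain := sq_mul_le_of_gap hone hfixed hδ
    (fun f hf => hgap f (by rwa [L2.inner_indicatorConstLp_one, setIntegral_univ] at hf))
    (re_inner_iterate_indicatorConstLp_nonneg hS hB) K
  rw [hu, hmean, RCLike.norm_ofReal, abs_of_pos hB0] at hmain
  refine le_of_mul_le_mul_right ?_ hB0
  linarith

theorem exists_pos_le_measure_of_gap [IsProbabilityMeasure μ] (hS : MeasurePreserving S μ μ)
    {δ : ℝ} (hδ : 0 < δ)
    (hgap : ∀ f : Lp 𝕜 2 μ, ∫ x, f x ∂μ = 0 →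
      δ * ‖f‖ ≤ ‖Lp.compMeasurePreserving S hS f - f‖) :
    ∃ ε : ℝ≥0∞, 0 < ε ∧ ∀ B, MeasurableSet B → 0 < μ B → ε ≤ μ B := by
  obtain ⟨K, hK⟩ := exists_nat_gt (8 / δ ^ 2)
  have hK0 : 0 < (K : ℝ) := (by positivity : 0 ≤ 8 / δ ^ 2).trans_lt hK
  refine ⟨ENNReal.ofReal (1 / (2 * K)), ENNReal.ofReal_pos.2 (by positivity), fun B hB hB0 => ?_⟩
  rw [ENNReal.ofReal_le_iff_le_toReal (measure_ne_top μ B), ← Measure.real]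
  by_contra! hsmall
  have hmain := sq_mul_sub_sq_mul_measureReal_le_of_gap hS hδ.le hgap hB
    (ENNReal.toReal_pos hB0.ne' (measure_ne_top μ B)) K
  rw [lt_div_iff₀ (by positivity)] at hsmall
  rw [div_lt_iff₀ (by positivity)] at hK
  have hhalf : (K : ℝ) / 2 < K - K ^ 2 * μ.real B := by nlinarith
  nlinarith [mul_lt_mul_of_pos_left hhalf (by positivity : 0 < δ ^ 2)]

end Koopman

/-- `ν` is the spectral measure of the vector `f` for the unitary operator `U`: its Fourier
coefficients are the correlations `⟪U ^ n f, f⟫`. Finiteness of `ν` is not part of the definition: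
if `ν` is infinite, then the integral for `n = 0` has the junk value `0`, so that `f = 0`. -/
def IsSpectralMeasure {H : Type*} [NormedAddCommGroup H] [InnerProductSpace ℂ H]
    (U : H ≃ₗᵢ[ℂ] H) (f : H) {p : ℝ} (ν : Measure (AddCircle p)) : Prop :=
  ∀ n : ℤ, ⟪(U ^ n) f, f⟫_ℂ = ∫ z, fourier n z ∂ν

namespace IsSpectralMeasure

variable {H : Type*} [NormedAddCommGroup H] [InnerProductSpace ℂ H] {U : H ≃ₗᵢ[ℂ] H} {f : H}
  {p : ℝ} {ν : Measure (AddCircle p)}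

theorem measureReal_univ (h : IsSpectralMeasure U f ν) : ν.real Set.univ = ‖f‖ ^ 2 := by
  have h0 := h 0
  have hcast : ((‖f‖ ^ 2 : ℝ) : ℂ) = (ν.real Set.univ : ℂ) := by
    simpa [inner_self_eq_norm_sq_to_K] using h0
  exact_mod_cast hcast.symm

theorem ne_zero [IsFiniteMeasure ν] (h : IsSpectralMeasure U f ν) (hν : ν ≠ 0) : f ≠ 0 := by
  rintro rfl
  have hnorm := h.measureReal_univ
  rw [norm_zero, zero_pow two_ne_zero, measureReal_eq_zero_iff] at hnorm
  exact hν (Measure.measure_univ_eq_zero.1 hnorm)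

theorem isFiniteMeasure (h : IsSpectralMeasure U f ν) (hf : f ≠ 0) : IsFiniteMeasure ν := by
  refine ⟨lt_top_iff_ne_top.2 fun htop => hf ?_⟩
  have hnorm := h.measureReal_univ
  rw [Measure.real, htop, ENNReal.toReal_top] at hnorm
  simpa using hnorm.symm

theorem norm_apply_sub_sq [IsFiniteMeasure ν] (h : IsSpectralMeasure U f ν) :
    ‖U f - f‖ ^ 2 = ∫ z, ‖(fourier 1 z : ℂ) - 1‖ ^ 2 ∂ν := by
  have hintegrable : Integrable (fun z => (fourier 1 z : ℂ)) ν :=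
    .of_bound (fourier 1).continuous.aestronglyMeasurable 1
      (.of_forall fun z => by rw [fourier_apply, Circle.norm_coe])
  have hpoint (z : AddCircle p) :
      ‖(fourier 1 z : ℂ) - 1‖ ^ 2 = 2 - 2 * RCLike.re (fourier 1 z : ℂ) := by
    rw [norm_sub_sq (𝕜 := ℂ), ← inner_conj_symm, RCLike.conj_re, RCLike.inner_apply, map_one,
      mul_one, fourier_apply, Circle.norm_coe, norm_one]
    ring
  have h1 : ⟪U f, f⟫_ℂ = ∫ z, fourier 1 z ∂ν := by simpa only [zpow_one] using h 1
  calc ‖U f - f‖ ^ 2 = 2 * ‖f‖ ^ 2 - 2 * RCLike.re ⟪U f, f⟫_ℂ := by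
        rw [norm_sub_sq (𝕜 := ℂ), U.norm_map]
        ring
    _ = ∫ z, (2 - 2 * RCLike.re (fourier 1 z : ℂ)) ∂ν := by
        rw [integral_sub (integrable_const _) (hintegrable.re.const_mul 2), integral_const,
          integral_const_mul, h.measureReal_univ, h1, integral_re hintegrable, smul_eq_mul,
          mul_comm]
    _ = ∫ z, ‖(fourier 1 z : ℂ) - 1‖ ^ 2 ∂ν := by simp only [hpoint]

theorem mul_norm_le_norm_apply_sub (h : IsSpectralMeasure U f ν) {δ : ℝ} (hδ : 0 ≤ δ)
    (hν : ∀ᵐ z ∂ν, δ ≤ ‖(fourier 1 z : ℂ) - 1‖) : δ * ‖f‖ ≤ ‖U f - f‖ := by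
  rcases eq_or_ne f 0 with rfl | hf
  · simp
  have := h.isFiniteMeasure hf
  have hbound (z : AddCircle p) : ‖(fourier 1 z : ℂ) - 1‖ ≤ 2 :=
    (norm_sub_le _ _).trans (by rw [fourier_apply, Circle.norm_coe, norm_one]; norm_num)
  have hintegrable : Integrable (fun z => ‖(fourier 1 z : ℂ) - 1‖ ^ 2) ν :=
    .of_bound (by fun_prop) (2 ^ 2) (.of_forall fun z => by
      rw [norm_pow, norm_norm]
      gcongr
      exact hbound z)
  refine le_of_sq_le_sq ?_ (norm_nonneg _)
  calc (δ * ‖f‖) ^ 2 = ∫ _, δ ^ 2 ∂ν := by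
        rw [integral_const, h.measureReal_univ, smul_eq_mul]
        ring
    _ ≤ ∫ z, ‖(fourier 1 z : ℂ) - 1‖ ^ 2 ∂ν := by
        refine integral_mono_ae (integrable_const _) hintegrable ?_
        filter_upwards [hν] with z hz
        gcongr
    _ = ‖U f - f‖ ^ 2 := h.norm_apply_sub_sq.symm

end IsSpectralMeasure

theorem exists_pos_le_norm_fourier_one_sub_one {p : ℝ} (hp : p ≠ 0) {N : Set (AddCircle p)}
    (hN : N ∈ 𝓝 0) : ∃ δ > 0, ∀ z ∉ N, δ ≤ ‖(fourier 1 z : ℂ) - 1‖ := by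
  have hcoe : (fun z : AddCircle p => (fourier 1 z : ℂ)) =
      fun z => (AddCircle.homeomorphCircle hp z : ℂ) :=
    funext fun z => by rw [fourier_one, AddCircle.homeomorphCircle_apply]
  have hind : IsInducing fun z : AddCircle p => (fourier 1 z : ℂ) := by
    rw [hcoe]
    exact IsInducing.subtypeVal.comp (AddCircle.homeomorphCircle hp).isInducing
  rw [hind.nhds_eq_comap, mem_comap] at hN
  obtain ⟨V, hV, hVN⟩ := hN
  obtain ⟨δ, hδ, hball⟩ := Metric.mem_nhds_iff.1 hV
  refine ⟨δ, hδ, fun z hz => not_lt.1 fun hlt => hz (hVN (hball ?_))⟩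
  simpa [dist_eq_norm] using hlt

theorem zero_mem_support_of_small_sets {X : Type*} [MeasurableSpace X] {μ : Measure X}
    [IsProbabilityMeasure μ] {S : X → X} (hS : MeasurePreserving S μ μ)
    (hsmall : ∀ ε : ℝ≥0∞, 0 < ε → ∃ B, MeasurableSet B ∧ 0 < μ B ∧ μ B < ε)
    {U : Lp ℂ 2 μ ≃ₗᵢ[ℂ] Lp ℂ 2 μ} (hU : ∀ f : Lp ℂ 2 μ, U f =ᵐ[μ] fun x => f (S x))
    {p : ℝ} (hp : p ≠ 0) {σ : Measure (AddCircle p)}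
    (hspec : ∀ f : Lp ℂ 2 μ, ∫ x, f x ∂μ = 0 →
      ∃ σf : Measure (AddCircle p), σf ≪ σ ∧ IsSpectralMeasure U f σf) :
    0 ∈ σ.support := by
  by_contra h0
  obtain ⟨N, hN, hσN⟩ := Measure.notMem_support_iff_exists.1 h0
  obtain ⟨δ, hδ, hδN⟩ := exists_pos_le_norm_fourier_one_sub_one hp hN
  have hUS (f : Lp ℂ 2 μ) : U f = Lp.compMeasurePreserving S hS f :=
    Lp.ext ((hU f).trans (Lp.coeFn_compMeasurePreserving f hS).symm)
  have hgap (f : Lp ℂ 2 μ) (hf : ∫ x, f x ∂μ = 0) :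
      δ * ‖f‖ ≤ ‖Lp.compMeasurePreserving S hS f - f‖ := by
    obtain ⟨σf, hσf, hfspec⟩ := hspec f hf
    rw [← hUS]
    refine hfspec.mul_norm_le_norm_apply_sub hδ.le ?_
    filter_upwards [measure_eq_zero_iff_ae_notMem.1 (hσf hσN)] with z hz using hδN z hz
  obtain ⟨ε, hε, hεB⟩ := exists_pos_le_measure_of_gap hS hδ hgap
  obtain ⟨B, hB, hB0, hBε⟩ := hsmall ε hε
  exact hBε.not_ge (hεB B hB hB0)

section SmallSets

variable {X : Type*} [MeasurableSpace X] {μ : Measure X}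

theorem exists_measure_pos_measure_compl_pos {E : Type*} [TopologicalSpace E]
    [TopologicalSpace.MetrizableSpace E] [Nonempty E] {f : X → E} (hf : AEStronglyMeasurable f μ)
    (hconst : ∀ c, ¬ f =ᵐ[μ] Function.const X c) :
    ∃ A, MeasurableSet A ∧ 0 < μ A ∧ 0 < μ Aᶜ := by
  by_contra! htrivial
  have hergodic : Ergodic id μ := by
    refine ⟨.id μ, ⟨fun A hA _ => eventuallyConst_set'.2 ?_⟩⟩
    rcases eq_zero_or_pos (μ A) with h | h
    · exact Or.inl (ae_eq_empty.2 h)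
    · exact Or.inr (ae_eq_univ.2 (nonpos_iff_eq_zero.1 (htrivial A hA h)))
  obtain ⟨c, hc⟩ := hergodic.ae_eq_const_of_ae_eq_comp_ae hf .rfl
  exact hconst c hc

theorem exists_measure_pos_lt_of_tendsto_measure_inter [IsFiniteMeasure μ] [NeZero μ]
    {A : ℕ → Set X} (hA : ∀ m, MeasurableSet (A m)) {a : ℝ≥0∞} (ha0 : a ≠ 0) (ha1 : a < 1)
    (hlim : ∀ B, MeasurableSet B → Tendsto (fun m => μ (B ∩ A m)) atTop (𝓝 (μ B * a)))
    {ε : ℝ≥0∞} (hε : 0 < ε) : ∃ B, MeasurableSet B ∧ 0 < μ B ∧ μ B < ε := by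
  obtain ⟨c, hac, hc1⟩ := exists_between ha1
  have hshrink (B : Set X) (hB : MeasurableSet B) (hB0 : 0 < μ B) :
      ∃ C, MeasurableSet C ∧ 0 < μ C ∧ μ C ≤ μ B * c := by
    have hlt : μ B * a < μ B * c :=
      ENNReal.mul_lt_mul_right hB0.ne' (measure_ne_top μ B) hac
    obtain ⟨m, hpos, hle⟩ := (((hlim B hB).eventually_const_lt
      (ENNReal.mul_pos hB0.ne' ha0)).and ((hlim B hB).eventually_lt_const hlt)).exists
    exact ⟨B ∩ A m, hB.inter (hA m), hpos, hle.le⟩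
  have hgeom (n : ℕ) : ∃ B, MeasurableSet B ∧ 0 < μ B ∧ μ B ≤ μ Set.univ * c ^ n := by
    induction n with
    | zero => exact ⟨Set.univ, .univ, NeZero.pos _, by simp⟩
    | succ n ih =>
      obtain ⟨B, hB, hB0, hBn⟩ := ih
      obtain ⟨C, hC, hC0, hCB⟩ := hshrink B hB hB0
      refine ⟨C, hC, hC0, hCB.trans ?_⟩
      rw [pow_succ, ← mul_assoc]
      gcongr
  have hzero : Tendsto (fun n => μ Set.univ * c ^ n) atTop (𝓝 0) := by
    simpa using ENNReal.Tendsto.const_mul (ENNReal.tendsto_pow_atTop_nhds_zero_of_lt_one hc1)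
      (Or.inr (measure_ne_top μ Set.univ))
  obtain ⟨n, hn⟩ := (hzero.eventually_lt_const hε).exists
  obtain ⟨B, hB, hB0, hBn⟩ := hgeom n
  exact ⟨B, hB, hB0, hBn.trans_lt hn⟩

theorem exists_measure_pos_lt_of_mixing [IsProbabilityMeasure μ] {T : X ≃ᵐ X}
    (hmix : ∀ A B : Set X, MeasurableSet A → MeasurableSet B →
      Tendsto (fun m : ℕ => μ (A ∩ (⇑T)^[m] '' B)) atTop (𝓝 (μ A * μ B)))
    {f : Lp ℂ 2 μ} (hf : ∫ x, f x ∂μ = 0) (hf0 : f ≠ 0) {ε : ℝ≥0∞} (hε : 0 < ε) :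
    ∃ B, MeasurableSet B ∧ 0 < μ B ∧ μ B < ε := by
  have hconst (c : ℂ) : ¬ f =ᵐ[μ] Function.const X c := by
    intro hc
    have hc0 : c = 0 := by simpa [integral_congr_ae hc] using hf
    rw [hc0] at hc
    exact hf0 (Lp.eq_zero_iff_ae_eq_zero.2 hc)
  obtain ⟨A, hA, hA0, hA1⟩ :=
    exists_measure_pos_measure_compl_pos (Lp.aestronglyMeasurable f) hconst
  have hA_lt : μ A < 1 := by
    rw [prob_compl_eq_one_sub hA] at hA1
    exact tsub_pos_iff_lt.1 hA1
  have himage (m : ℕ) : MeasurableSet ((⇑T)^[m] '' A) := by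
    rw [Set.image_eq_preimage_of_inverse (Function.LeftInverse.iterate T.symm_apply_apply m)
      (Function.LeftInverse.iterate T.apply_symm_apply m)]
    exact T.symm.measurable.iterate m hA
  exact exists_measure_pos_lt_of_tendsto_measure_inter himage hA0.ne' hA_lt
    (fun B hB => hmix B A hB hA) hε

end SmallSets

theorem spectral_type_singular_of_singular_convolution_powers_general
    {X : Type*} [MeasurableSpace X] {μ : Measure X} [IsProbabilityMeasure μ]
    (hsmall : ∀ ε : ℝ≥0∞, 0 < ε → ∃ B, MeasurableSet B ∧ 0 < μ B ∧ μ B < ε)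
    {S : X → X} (hS : MeasurePreserving S μ μ)
    {U : Lp ℂ 2 μ ≃ₗᵢ[ℂ] Lp ℂ 2 μ} (hU : ∀ f : Lp ℂ 2 μ, U f =ᵐ[μ] fun x => f (S x))
    {σ : Measure (AddCircle (1 : ℝ))} [SFinite σ]
    (hspec : ∀ f : Lp ℂ 2 μ, ∫ x, f x ∂μ = 0 →
      ∃ σf : Measure (AddCircle (1 : ℝ)), σf ≪ σ ∧ IsSpectralMeasure U f σf)
    {m n : ℕ} (hm : 1 ≤ m) (hn : 1 ≤ n) (hmn : m ≠ n) (hsing : convPow σ m ⟂ₘ convPow σ n) :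
    σ ⟂ₘ volume := by
  have h0 : 0 ∈ σ.support := zero_mem_support_of_small_sets hS hsmall hU one_ne_zero hspec
  by_contra hσ
  rcases hmn.lt_or_gt with h | h
  · exact not_convPow_mutuallySingular_convPow h0 hσ hm h hsing
  · exact not_convPow_mutuallySingular_convPow h0 hσ hn h hsing.symm

/-- If the maximal spectral type `σ` of a mixing automorphism `T` has, for some `m ≠ n`,
mutually singular convolution powers `σ^{*m}` and `σ^{*n}`, then `σ` is singular with
respect to Lebesgue (Haar) measure on the circle. -/
theorem spectral_type_singular_of_singular_convolution_powers
    {X : Type*} [MeasurableSpace X] [StandardBorelSpace X]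
    (μ : Measure X) [IsProbabilityMeasure μ]
    (T : X ≃ᵐ X) (hT : MeasurePreserving T μ μ)
    (hmix : ∀ A B : Set X, MeasurableSet A → MeasurableSet B →
      Tendsto (fun m : ℕ => μ (A ∩ (⇑T)^[m] '' B)) atTop (nhds (μ A * μ B)))
    (U : Lp ℂ 2 μ ≃ₗᵢ[ℂ] Lp ℂ 2 μ)
    (hU : ∀ f : Lp ℂ 2 μ, (U f : X → ℂ) =ᵐ[μ] fun x => f (T.symm x))
    -- σ : the maximal spectral type of U on the mean-zero subspace H
    (σ : Measure (AddCircle (1 : ℝ))) [IsFiniteMeasure σ]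
    (hspec : ∀ f : Lp ℂ 2 μ, ∫ x, f x ∂μ = 0 →
      ∃ σf : Measure (AddCircle (1 : ℝ)), σf ≪ σ ∧
        ∀ n : ℤ, ⟪(U ^ n) f, f⟫_ℂ = ∫ z, fourier n z ∂σf)
    (hmax : ∃ f : Lp ℂ 2 μ, ∫ x, f x ∂μ = 0 ∧
      ∀ n : ℤ, ⟪(U ^ n) f, f⟫_ℂ = ∫ z, fourier n z ∂σ)
    (m n : ℕ) (hm : 1 ≤ m) (hn : 1 ≤ n) (hmn : m ≠ n)
    (hsing : convPow σ m ⟂ₘ convPow σ n) :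
    σ ⟂ₘ (MeasureTheory.volume : Measure (AddCircle (1 : ℝ))) := by
  rcases eq_or_ne σ 0 with rfl | hσ
  · exact Measure.MutuallySingular.zero_left
  obtain ⟨f, hf, hfσ⟩ := hmax
  have hf0 : f ≠ 0 := IsSpectralMeasure.ne_zero hfσ hσ
  exact spectral_type_singular_of_singular_convolution_powers_general
    (fun _ => exists_measure_pos_lt_of_mixing hmix hf hf0) (hT.symm T) hU hspec hm hn hmn hsing
end
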